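/- arXiv:2009.14400 — 2 statements merged into one kernel-verified Lean document; each statement's English description precedes it below -/
import Mathlib

section
/- Let L be a number field that is Galois over ℚ with Galois group G, let τ : L ↪ ℂ be a complex embedding, and let c₀ ∈ G be the complex conjugation induced by τ. Then there is an isomorphism of ℚ[G]-modules (𝓞_L^× ⊗_ℤ ℚ) ⊕ ℚ ≅ ℚ[G/⟨c₀⟩], where ℚ carries the trivial G-action and ℚ[G/⟨c₀⟩] is the permutation representation of G on the left cosets of the subgroup ⟨c₀⟩ generated by c₀. Equivalently, 𝓞_L^× modulo torsion, tensored with ℚ, is isomorphic as a G-representation to Ind_{⟨c₀⟩}^G ℚ minus one copy of the trivial representation. -/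
/-!
A family of units `u_w` with `|u_w|_{w'} < 1` for all `w' ≠ w` becomes equivariant, with the same
inequalities, on replacing `u_w` by `∏_{σ ∈ Aut(L/ℚ)} σ (u_{σ⁻¹w})`. The matrix of logarithms of
normalized absolute values `log ‖u_w‖_{w'}` then has negative off-diagonal entries, and by the
product formula its columns sum to zero. The kernel of such a matrix contains no nonzero vector
with coordinate sum zero, so the vectors `(u_w, 1)` are linearly independent in
`(ℚ ⊗ 𝓞_L^×) × ℚ`. By Dirichlet's unit theorem they form a basis, and the automorphisms permute it
as they permute the infinite places. When `L/ℚ` is Galois, the infinite places form a single orbit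
with stabilizer `⟨c₀⟩`.
-/

open NumberField TensorProduct

/-- The natural action of an automorphism `σ ∈ Gal(L/ℚ)` of a number field `L` on the unit
group of its ring of integers, written additively and `ℤ`-linearly. -/
noncomputable def galUnitsLinear (L : Type*) [Field L] [NumberField L] (σ : L ≃ₐ[ℚ] L) :
    Additive (𝓞 L)ˣ →ₗ[ℤ] Additive (𝓞 L)ˣ :=
  (MonoidHom.toAdditive
    (Units.map ((galRestrict ℤ ℚ L (𝓞 L) σ : (𝓞 L) ≃ₐ[ℤ] (𝓞 L)) : (𝓞 L) →* (𝓞 L)))).toIntLinearMap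

open NumberField.InfinitePlace Matrix

lemma eq_zero_of_mulVec_eq_zero_of_sum_eq_zero {ι R : Type*} [Fintype ι] [Ring R] [LinearOrder R]
    [IsStrictOrderedRing R] {M : Matrix ι ι R} (hoff : ∀ i j, i ≠ j → M i j < 0)
    (hcol : ∀ j, 0 ≤ ∑ i, M i j) {a : ι → R} (hker : M *ᵥ a = 0) (hsum : ∑ j, a j = 0) :
    a = 0 := by
  suffices hle : ∀ j, a j ≤ 0 from funext fun j =>
    (Finset.sum_eq_zero_iff_of_nonpos fun j _ => hle j).1 hsum j (Finset.mem_univ j)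
  by_contra! ⟨p, hp⟩
  obtain ⟨n, hn⟩ : ∃ n, a n ≤ 0 := by
    by_contra! hpos
    exact (Finset.sum_pos (fun j _ => hpos j) ⟨p, Finset.mem_univ p⟩).ne' hsum
  -- Adding up the rows of `M *ᵥ a = 0` at which `a` is positive leaves only nonnegative terms.
  let c : ι → R := fun j => ∑ i with 0 < a i, M i j
  have hsum_c : ∑ j, c j * a j = 0 := by
    simp only [c, Finset.sum_mul]
    rw [Finset.sum_comm]
    exact Finset.sum_eq_zero fun i _ => congrFun hker i
  have hc_pos : ∀ j, 0 < a j → 0 < c j := by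
    intro j hj
    have hneg : ∑ i with ¬ 0 < a i, M i j < 0 := by
      refine Finset.sum_neg (fun i hi => hoff i j ?_) ⟨n, by simpa using hn⟩
      rintro rfl
      exact (Finset.mem_filter.1 hi).2 hj
    have hsplit : 0 ≤ c j + ∑ i with ¬ 0 < a i, M i j :=
      (hcol j).trans_eq (Finset.sum_filter_add_sum_filter_not _ _ _).symm
    exact (neg_pos.2 hneg).trans_le (neg_le_iff_add_nonneg.2 hsplit)
  have hc_nonpos : ∀ j, a j ≤ 0 → c j ≤ 0 := fun j hj =>
    Finset.sum_nonpos fun i hi => (hoff i j (by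
      rintro rfl
      exact hj.not_gt (Finset.mem_filter.1 hi).2)).le
  have hterm : ∀ j, 0 ≤ c j * a j := fun j => (lt_or_ge 0 (a j)).elim
    (fun hj => (mul_pos (hc_pos j hj) hj).le)
    (fun hj => mul_nonneg_of_nonpos_of_nonpos (hc_nonpos j hj) hj)
  exact (mul_pos (hc_pos p hp) hp).ne'
    ((Finset.sum_eq_zero_iff_of_nonneg fun j _ => hterm j).1 hsum_c p (Finset.mem_univ p))

lemma basis_repr_apply_eq_mapDomain {ι R M : Type*} [Semiring R] [AddCommMonoid M] [Module R M]
    (b : Module.Basis ι R M) {T : M →ₗ[R] M} {g : ι → ι} (h : ∀ i, T (b i) = b (g i)) (x : M) :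
    b.repr (T x) = Finsupp.mapDomain g (b.repr x) := by
  have hcomp : b.repr ∘ₗ T = Finsupp.lmapDomain R R g ∘ₗ b.repr := b.ext fun i => by simp [h]
  exact LinearMap.congr_fun hcomp x

lemma exists_equivariant_equiv_quotient {G X : Type*} [Group G] [MulAction G X]
    [MulAction.IsPretransitive G X] {x : X} {H : Subgroup G}
    (hH : MulAction.stabilizer G x = H) :
    ∃ ψ : X ≃ G ⧸ H, ∀ (g : G) (y : X), ψ (g • y) = g • ψ y := by
  subst hH
  let ψ : G ⧸ MulAction.stabilizer G x ≃ X :=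
    Equiv.ofBijective (MulAction.ofQuotientStabilizer G x)
      ⟨MulAction.injective_ofQuotientStabilizer G x, fun y =>
        (MulAction.exists_smul_eq G x y).imp' QuotientGroup.mk fun _ => id⟩
  refine ⟨ψ.symm, fun g y => ?_⟩
  rw [Equiv.symm_apply_eq]
  exact (congrArg (g • ·) (ψ.apply_symm_apply y).symm).trans
    (MulAction.ofQuotientStabilizer_smul G x g _).symm

lemma stabilizer_mk_eq_zpowers {k K : Type*} [Field k] [Field K] [Algebra k K] {φ : K →+* ℂ}
    {σ : K ≃ₐ[k] K} (hσ : ComplexEmbedding.IsConj φ σ) :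
    MulAction.stabilizer (K ≃ₐ[k] K) (InfinitePlace.mk φ) = Subgroup.zpowers σ := by
  apply le_antisymm
  · intro ρ hρ
    rw [← SetLike.mem_coe, hσ.coe_stabilizer_mk] at hρ
    obtain rfl | rfl := hρ
    · exact one_mem _
    · exact Subgroup.mem_zpowers _
  · rw [Subgroup.zpowers_le, ← SetLike.mem_coe, hσ.coe_stabilizer_mk]
    exact Set.mem_insert_of_mem _ rfl

lemma isPretransitive_infinitePlace (k K : Type*) [Field k] [Field K] [Algebra k K] [IsGalois k K]
    [Subsingleton (InfinitePlace k)] :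
    MulAction.IsPretransitive (K ≃ₐ[k] K) (InfinitePlace K) :=
  ⟨fun _ _ => exists_smul_eq_of_comap_eq (Subsingleton.elim _ _)⟩

lemma exists_equivariant_infinitePlace_equiv_quotient {k K : Type*} [Field k] [Field K]
    [Algebra k K] [IsGalois k K] [Subsingleton (InfinitePlace k)] {φ : K →+* ℂ} {σ : K ≃ₐ[k] K}
    (hσ : ComplexEmbedding.IsConj φ σ) :
    ∃ ψ : InfinitePlace K ≃ (K ≃ₐ[k] K) ⧸ Subgroup.zpowers σ,
      ∀ (ρ : K ≃ₐ[k] K) (w : InfinitePlace K), ψ (ρ • w) = ρ • ψ w :=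
  have := isPretransitive_infinitePlace k K
  exists_equivariant_equiv_quotient (stabilizer_mk_eq_zpowers hσ)

section Units

variable {L : Type*} [Field L]

/-- The logarithm of the normalized absolute value of a unit at `w`: the exponent `w.mult`, which is
`2` at a complex place, makes the values at all places sum to zero. -/
noncomputable def logNormalizedAbs (w : InfinitePlace L) : Additive (𝓞 L)ˣ →ₗ[ℤ] ℝ :=
  AddMonoidHom.toIntLinearMap
    { toFun x := w.mult * Real.log (w (x.toMul : L))
      map_zero' := by simp
      map_add' x y := by
        simp [Real.log_mul (Units.pos_at_place _ w).ne' (Units.pos_at_place _ w).ne', mul_add] }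

lemma logNormalizedAbs_apply (w : InfinitePlace L) (x : Additive (𝓞 L)ˣ) :
    logNormalizedAbs w x = w.mult * Real.log (w (x.toMul : L)) := rfl

variable [NumberField L]

lemma sum_logNormalizedAbs (x : Additive (𝓞 L)ˣ) : ∑ w, logNormalizedAbs w x = 0 :=
  Units.sum_mult_mul_log x.toMul

lemma galUnitsLinear_mul_apply (σ ρ : L ≃ₐ[ℚ] L) (x : Additive (𝓞 L)ˣ) :
    galUnitsLinear L (σ * ρ) x = galUnitsLinear L σ (galUnitsLinear L ρ x) := by
  apply Additive.toMul.injective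
  ext
  simp [galUnitsLinear]

lemma logNormalizedAbs_galUnitsLinear (w : InfinitePlace L) (σ : L ≃ₐ[ℚ] L)
    (x : Additive (𝓞 L)ˣ) :
    logNormalizedAbs w (galUnitsLinear L σ x) = logNormalizedAbs (σ⁻¹ • w) x := by
  have hmult : (σ⁻¹ • w).mult = w.mult := by
    classical simp only [mult, isReal_smul_iff]
  rw [logNormalizedAbs_apply, logNormalizedAbs_apply, InfinitePlace.smul_apply, hmult]
  exact congrArg (fun y => w.mult * Real.log (w y)) (algebraMap_galRestrict_apply ℤ σ _)

variable (L) in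
lemma exists_equivariant_units_logNormalizedAbs_neg :
    ∃ f : InfinitePlace L → Additive (𝓞 L)ˣ,
      (∀ (σ : L ≃ₐ[ℚ] L) w, galUnitsLinear L σ (f w) = f (σ • w)) ∧
      ∀ v w, v ≠ w → logNormalizedAbs v (f w) < 0 := by
  choose u hu using Units.dirichletUnitTheorem.exists_unit L
  refine ⟨fun w => ∑ σ : L ≃ₐ[ℚ] L, galUnitsLinear L σ (.ofMul (u (σ⁻¹ • w))), fun ρ w => ?_,
    fun v w hvw => ?_⟩
  · rw [map_sum]
    refine Fintype.sum_equiv (Equiv.mulLeft ρ) _ _ fun σ => ?_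
    simp [galUnitsLinear_mul_apply, mul_smul]
  · rw [map_sum]
    refine Finset.sum_neg (fun σ _ => ?_) Finset.univ_nonempty
    rw [logNormalizedAbs_galUnitsLinear]
    exact mul_neg_of_pos_of_neg (Nat.cast_pos.2 mult_pos)
      (hu _ _ ((MulAction.injective σ⁻¹).ne hvw))

lemma linearIndependent_tmul_one_of_logNormalizedAbs_neg {f : InfinitePlace L → Additive (𝓞 L)ˣ}
    (hf : ∀ v w, v ≠ w → logNormalizedAbs v (f w) < 0) :
    LinearIndependent ℚ
      fun w => (((1 : ℚ) ⊗ₜ[ℤ] f w, 1) : (ℚ ⊗[ℤ] Additive (𝓞 L)ˣ) × ℚ) := by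
  rw [Fintype.linearIndependent_iff]
  intro a ha
  have hunits : ∑ w, a w • ((1 : ℚ) ⊗ₜ[ℤ] f w) = 0 := by
    simpa [Prod.fst_sum] using congrArg Prod.fst ha
  have hsum : ∑ w, a w = 0 := by
    simpa [Prod.snd_sum] using congrArg Prod.snd ha
  have hker : (Matrix.of fun v w => logNormalizedAbs v (f w)) *ᵥ (fun w => (a w : ℝ)) = 0 := by
    ext v
    simpa [mulVec, dotProduct, Rat.smul_def, mul_comm]
      using congrArg (LinearMap.liftBaseChange ℚ (logNormalizedAbs v)) hunits
  have ha_zero := eq_zero_of_mulVec_eq_zero_of_sum_eq_zero hf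
    (fun w => (sum_logNormalizedAbs (f w)).ge) hker (by exact_mod_cast hsum)
  exact fun w => Rat.cast_eq_zero.1 (congrFun ha_zero w)

variable (L) in
lemma finrank_rat_tensor_units_prod_rat :
    Module.finrank ℚ ((ℚ ⊗[ℤ] Additive (𝓞 L)ˣ) × ℚ) = Fintype.card (InfinitePlace L) := by
  rw [Module.finrank_prod, Module.finrank_self,
    (TensorProduct.isBaseChange ℤ (Additive (𝓞 L)ˣ) ℚ).finrank_eq, Units.finrank_eq, Units.rank,
    Nat.sub_add_cancel Fintype.card_pos]

end Units

theorem units_tensor_rat_iso_permutation_rep_general (L : Type*) [Field L] [NumberField L] :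
    ∃ e : ((ℚ ⊗[ℤ] Additive (𝓞 L)ˣ) × ℚ) ≃ₗ[ℚ] (InfinitePlace L →₀ ℚ),
      ∀ (σ : L ≃ₐ[ℚ] L) (x : (ℚ ⊗[ℤ] Additive (𝓞 L)ˣ) × ℚ),
        e (LinearMap.baseChange ℚ (galUnitsLinear L σ) x.1, x.2) =
          Finsupp.mapDomain (fun w : InfinitePlace L => σ • w) (e x) := by
  obtain ⟨f, hequiv, hneg⟩ := exists_equivariant_units_logNormalizedAbs_neg L
  let b := basisOfLinearIndependentOfCardEqFinrank
    (linearIndependent_tmul_one_of_logNormalizedAbs_neg hneg)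
    (finrank_rat_tensor_units_prod_rat L).symm
  refine ⟨b.repr, fun σ => basis_repr_apply_eq_mapDomain b
    (T := ((galUnitsLinear L σ).baseChange ℚ).prodMap LinearMap.id) fun w => ?_⟩
  simp [b, hequiv]

/-- Let `L` be a number field, Galois over `ℚ` with Galois group `G`, let
`τ : L ↪ ℂ` be a complex embedding and `c₀ ∈ G` the complex conjugation induced by `τ`.
Then there is an isomorphism of `ℚ[G]`-modules `(𝓞_L^× ⊗_ℤ ℚ) ⊕ ℚ ≅ ℚ[G/⟨c₀⟩]`, where `ℚ`
carries the trivial `G`-action and `ℚ[G/⟨c₀⟩]` is the permutation representation of `G` on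
the left cosets of `⟨c₀⟩`; i.e. there is a `ℚ`-linear equivalence intertwining the `G`-actions
(`G` acting on the left factor through its action on units, trivially on the `ℚ`-summand, and
by translation of cosets on the right-hand side). -/
theorem units_tensor_rat_iso_permutation_rep
    (L : Type*) [Field L] [NumberField L] [IsGalois ℚ L]
    (τ : L →+* ℂ) (c₀ : L ≃ₐ[ℚ] L)
    (hc₀ : ∀ x : L, τ (c₀ x) = (starRingEnd ℂ) (τ x)) :
    ∃ e : ((ℚ ⊗[ℤ] Additive (𝓞 L)ˣ) × ℚ) ≃ₗ[ℚ]
        (((L ≃ₐ[ℚ] L) ⧸ Subgroup.zpowers c₀) →₀ ℚ),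
      ∀ (σ : L ≃ₐ[ℚ] L) (x : (ℚ ⊗[ℤ] Additive (𝓞 L)ˣ) × ℚ),
        e (LinearMap.baseChange ℚ (galUnitsLinear L σ) x.1, x.2) =
          Finsupp.mapDomain (fun y : (L ≃ₐ[ℚ] L) ⧸ Subgroup.zpowers c₀ => σ • y) (e x) := by
  obtain ⟨e, he⟩ := units_tensor_rat_iso_permutation_rep_general L
  obtain ⟨ψ, hψ⟩ := exists_equivariant_infinitePlace_equiv_quotient (φ := τ) (σ := c₀)
    (RingHom.ext fun x => (hc₀ x).symm)
  exact ⟨e.trans (Finsupp.domLCongr ψ), fun σ x => by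
    simp [he, Finsupp.equivMapDomain_eq_mapDomain, ← Finsupp.mapDomain_comp, Function.comp_def, hψ]⟩
end

section
/- Let L be a number field that is Galois over ℚ with Galois group G, let τ : L ↪ ℂ be a complex embedding, and let c₀ ∈ G be the complex conjugation induced by τ. Let E be a field of characteristic 0 and let M be a finite-dimensional E-linear representation of G containing no copy of the trivial representation (equivalently, M^G = 0). Then dim_E Hom_{E[G]}(M, 𝓞_L^× ⊗_ℤ E) = dim_E M^{⟨c₀⟩}, the dimension of the subspace of M fixed by c₀. -/
open NumberField TensorProduct

/-- The induced (`E`-linear) Galois action on `𝓞_L^× ⊗_ℤ E`. -/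
noncomputable def galUnitsTensor (L : Type*) [Field L] [NumberField L]
    (E : Type*) [Field E] (σ : L ≃ₐ[ℚ] L) :
    (E ⊗[ℤ] Additive (𝓞 L)ˣ) →ₗ[E] (E ⊗[ℤ] Additive (𝓞 L)ˣ) :=
  LinearMap.baseChange E (galUnitsLinear L σ)

/-- The submodule of `G`-equivariant `E`-linear maps between two spaces equipped with
(`E`-linear) `G`-actions `ρ` and `ν`. -/
def equivariantHoms {E G M N : Type*} [CommSemiring E]
    [AddCommMonoid M] [Module E M] [AddCommMonoid N] [Module E N]
    (ρ : G → M →ₗ[E] M) (ν : G → N →ₗ[E] N) : Submodule E (M →ₗ[E] N) where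
  carrier := {φ | ∀ g : G, ∀ m : M, φ (ρ g m) = ν g (φ m)}
  add_mem' := by intro a b ha hb g m; simp [ha g m, hb g m]
  zero_mem' := by intro g m; simp
  smul_mem' := by intro c φ hφ g m; simp [hφ g m]

/-!
Let `P` be the set of infinite places of `L`. By Dirichlet's unit theorem the logarithmic embedding
makes `ℝ ⊗ 𝓞_L^×` the sum-zero hyperplane of the permutation module `ℝ^P`, so the character of
`𝓞_L^× ⊗ ℝ` is the permutation character of `P` minus `1`. The trace of `σ` on `𝓞_L^× ⊗ E` comes
from its trace on `𝓞_L^× ⊗ ℚ`, so the same formula holds over every `E` of characteristic zero. As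
`P` is a transitive `G`-set, pairing with the character of `M` gives
`dim Hom_G(M, 𝓞_L^× ⊗ E) = dim M^H - dim M^G` with `H` the stabilizer of a place, and the stabilizer
of the place of `τ` is `{1, c₀}`.
-/

section Trace

theorem trace_baseChange_eq_algebraMap_trace_baseChange {R A : Type*} [CommRing R]
    [AddCommGroup A] [Module R A] (f : A →ₗ[R] A) (S T : Type*) [CommRing S] [CommRing T]
    [Algebra R S] [Algebra S T] [Algebra R T] [IsScalarTower R S T]
    [Module.Free S (S ⊗[R] A)] [Module.Finite S (S ⊗[R] A)] :
    LinearMap.trace T (T ⊗[R] A) (f.baseChange T) =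
      algebraMap S T (LinearMap.trace S (S ⊗[R] A) (f.baseChange S)) := by
  let e := AlgebraTensorModule.cancelBaseChange R S T T A
  have hconj : e.conj ((f.baseChange S).baseChange T) = f.baseChange T := by
    rw [LinearEquiv.conj_apply, ← LinearEquiv.eq_comp_toLinearMap_symm]
    ext a
    simp [e]
  rw [← hconj, LinearMap.trace_conj', LinearMap.trace_baseChange]

theorem trace_baseChange_eq_intCast_iff {A : Type*} [AddCommGroup A] [Module.Finite ℤ A]
    (f : A →ₗ[ℤ] A) (n : ℤ) (E : Type*) [CommRing E] [Nontrivial E] [Algebra ℚ E] :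
    LinearMap.trace E (E ⊗[ℤ] A) (f.baseChange E) = n ↔
      LinearMap.trace ℚ (ℚ ⊗[ℤ] A) (f.baseChange ℚ) = n := by
  rw [trace_baseChange_eq_algebraMap_trace_baseChange f ℚ E, ← map_intCast (algebraMap ℚ E),
    (algebraMap ℚ E).injective.eq_iff]

theorem trace_funLeft {R P : Type*} [CommSemiring R] [Finite P] (f : P → P) :
    LinearMap.trace R (P → R) (LinearMap.funLeft R R f) = (Function.fixedPoints f).ncard := by
  classical
  have := Fintype.ofFinite P
  rw [LinearMap.trace_eq_matrix_trace R (Pi.basisFun R P), Matrix.trace]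
  simp [LinearMap.funLeft_apply, Pi.single_apply, Function.fixedPoints, Function.IsFixedPt,
    ← Set.ncard_coe_finset]

end Trace

section PermutationCharacter

open MulAction Module Representation

variable {G P : Type*} [Group G] [MulAction G P]

theorem sum_ncard_fixedBy_smul [Fintype G] [Fintype P] [DecidableEq P] {N : Type*} [AddCommMonoid N]
    (f : G → N) :
    ∑ g, (fixedBy P g).ncard • f g = ∑ x : P, ∑ g with g • x = x, f g := by
  simp_rw [Finset.sum_filter]
  rw [Finset.sum_comm]
  refine Finset.sum_congr rfl fun g _ => ?_
  rw [← Finset.sum_filter, Finset.sum_const, ← Set.ncard_coe_finset]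
  simp [fixedBy]

theorem sum_filter_smul_eq_smul [Fintype G] [DecidableEq P] {N : Type*} [AddCommMonoid N]
    {f : G → N} (hf : ∀ g h, f (h * g * h⁻¹) = f g) (h : G) (x : P) :
    ∑ g with g • h • x = h • x, f g = ∑ g with g • x = x, f g := by
  refine (Finset.sum_equiv (MulAut.conj h).toEquiv (fun g => ?_) fun g _ => ?_).symm
  · simp [mul_smul]
  · simp [hf]

theorem sum_ncard_fixedBy_smul_of_isPretransitive [Fintype G] [DecidableEq P]
    [IsPretransitive G P] {N : Type*} [AddCommMonoid N] {f : G → N}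
    (hf : ∀ g h, f (h * g * h⁻¹) = f g) (x : P) :
    ∑ g, (fixedBy P g).ncard • f g = Nat.card P • ∑ g with g • x = x, f g := by
  have : Finite P := .of_surjective _ (surjective_smul G x)
  have := Fintype.ofFinite P
  have hconst (y : P) : ∑ g with g • y = y, f g = ∑ g with g • x = x, f g := by
    obtain ⟨h, rfl⟩ := exists_smul_eq G x y
    exact sum_filter_smul_eq_smul hf h x
  simp [sum_ncard_fixedBy_smul, hconst]

variable {k M N : Type*} [Field k] [Invertible (Nat.card G : k)] [AddCommGroup M] [Module k M]
  [FiniteDimensional k M] [AddCommGroup N] [Module k N] [FiniteDimensional k N]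

theorem card_inv_mul_sum_ncard_fixedBy_mul_character [Fintype G] [IsPretransitive G P]
    (ρ : Representation k G M) (x : P) :
    (Nat.card G : k)⁻¹ * ∑ g, (fixedBy P g).ncard * ρ.character g =
      finrank k (invariants (ρ.comp (stabilizer G x).subtype)) := by
  classical
  have hcard : (Nat.card G : k) = Nat.card P * Nat.card (stabilizer G x) := by
    rw [← index_stabilizer_of_transitive G x, ← Nat.cast_mul, Subgroup.index_mul_card]
  have hne : (Nat.card P * Nat.card (stabilizer G x) : k) ≠ 0 :=
    hcard ▸ Invertible.ne_zero (Nat.card G : k)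
  have := invertibleOfNonzero (right_ne_zero_of_mul hne)
  have hstab : ∑ h : stabilizer G x, Representation.character (ρ.comp (stabilizer G x).subtype) h =
      ∑ g with g • x = x, ρ.character g :=
    (Finset.sum_subtype _ (by simp) ρ.character).symm
  have hsum := sum_ncard_fixedBy_smul_of_isPretransitive (f := ρ.character) (by simp) x
  simp only [nsmul_eq_mul] at hsum
  rw [← card_inv_mul_sum_char_eq_finrank, hstab, hsum, hcard,
    inv_mul_eq_div, inv_mul_eq_div, mul_div_mul_left _ _ (left_ne_zero_of_mul hne)]

theorem finrank_intertwiningMap_add_finrank_invariants [Finite G] [IsPretransitive G P]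
    (ρ : Representation k G M) {ν : Representation k G N}
    (hν : ∀ g, ν.character g = (fixedBy P g).ncard - 1) (x : P) :
    (finrank k (IntertwiningMap ρ ν) + finrank k ρ.invariants : k) =
      finrank k (invariants (ρ.comp (stabilizer G x).subtype)) := by
  have := Fintype.ofFinite G
  rw [← card_inv_mul_sum_char_mul_char_eq_finrank, ← card_inv_mul_sum_char_eq_finrank,
    ← card_inv_mul_sum_ncard_fixedBy_mul_character ρ x, ← mul_add,
    ← Equiv.sum_comp (Equiv.inv G) fun g => ν.character g * ρ.character g⁻¹,
    ← Finset.sum_add_distrib]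
  simp [hν, sub_mul]

end PermutationCharacter

section Invariants

theorem invariants_comp_subtype_eq_ker {k G M : Type*} [CommRing k] [Group G] [AddCommGroup M]
    [Module k M] (ρ : Representation k G M) {H : Subgroup G} {c : G} (hH : (H : Set G) = {1, c}) :
    Representation.invariants (ρ.comp H.subtype) = LinearMap.ker (ρ c - LinearMap.id) := by
  have hmem (g : G) : g ∈ H ↔ g = 1 ∨ g = c := by simp [← SetLike.mem_coe, hH]
  ext m
  simp [Representation.mem_invariants, hmem, sub_eq_zero]

/-- The equivariant maps between two representations, in the encoding of `equivariantHoms`, are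
Mathlib's intertwining maps. -/
def equivariantHomsEquivIntertwiningMap {k G M N : Type*} [CommSemiring k] [Monoid G]
    [AddCommMonoid M] [Module k M] [AddCommMonoid N] [Module k N] (ρ : Representation k G M)
    (ν : Representation k G N) : equivariantHoms ρ ν ≃ₗ[k] Representation.IntertwiningMap ρ ν where
  toFun φ := φ.1.intertwiningMap_of_isIntertwiningMap ρ ν φ.2
  map_add' _ _ := rfl
  map_smul' _ _ := rfl
  invFun φ := ⟨φ.toLinearMap, φ.isIntertwining⟩

end Invariants

section LogarithmicEmbedding

open InfinitePlace Units Units.dirichletUnitTheorem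

theorem infinitePlace_mult_smul {k K : Type*} [Field k] [Field K] [Algebra k K]
    (σ : K ≃ₐ[k] K) (w : InfinitePlace K) : mult (σ • w) = mult w := by
  classical exact if_congr isReal_smul_iff rfl rfl

variable (L : Type*) [Field L]

/-- The logarithmic embedding `u ↦ (w ↦ mult w * log |u|_w)` of the units, with all infinite places
kept: Mathlib's `Units.logEmbedding` omits one place, which destroys the Galois action. -/
noncomputable def fullLogEmbedding : Additive (𝓞 L)ˣ →+ (InfinitePlace L → ℝ) where
  toFun u w := mult w * Real.log (w (u.toMul : L))
  map_zero' := by ext; simp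
  map_add' _ _ := by ext; simp [Real.log_mul, mul_add]

/-- The `ℝ`-linear extension of the full logarithmic embedding. -/
noncomputable def realLogEmbedding : ℝ ⊗[ℤ] Additive (𝓞 L)ˣ →ₗ[ℝ] (InfinitePlace L → ℝ) :=
  (fullLogEmbedding L).toIntLinearMap.liftBaseChange ℝ

variable {L}

theorem fullLogEmbedding_apply (u : Additive (𝓞 L)ˣ) (w : InfinitePlace L) :
    fullLogEmbedding L u w = mult w * Real.log (w (u.toMul : L)) := rfl

theorem realLogEmbedding_tmul (r : ℝ) (u : Additive (𝓞 L)ˣ) :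
    realLogEmbedding L (r ⊗ₜ u) = r • fullLogEmbedding L u := rfl

variable [NumberField L]

theorem coe_galUnitsLinear (σ : L ≃ₐ[ℚ] L) (u : Additive (𝓞 L)ˣ) :
    ((galUnitsLinear L σ u).toMul : L) = σ (u.toMul : L) :=
  algebraMap_galRestrict_apply ℤ σ (u.toMul : 𝓞 L)

theorem fullLogEmbedding_galUnitsLinear (σ : L ≃ₐ[ℚ] L) (u : Additive (𝓞 L)ˣ)
    (w : InfinitePlace L) :
    fullLogEmbedding L (galUnitsLinear L σ u) w = fullLogEmbedding L u (σ⁻¹ • w) := by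
  rw [fullLogEmbedding_apply, fullLogEmbedding_apply, infinitePlace_mult_smul,
    InfinitePlace.smul_apply, coe_galUnitsLinear]
  rfl

theorem realLogEmbedding_galUnitsTensor (σ : L ≃ₐ[ℚ] L) (x : ℝ ⊗[ℤ] Additive (𝓞 L)ˣ) :
    realLogEmbedding L (galUnitsTensor L ℝ σ x) =
      LinearMap.funLeft ℝ ℝ (σ⁻¹ • ·) (realLogEmbedding L x) := by
  induction x with
  | zero => simp
  | add x y hx hy => simp only [map_add, hx, hy]
  | tmul r u =>
    ext w
    simp [galUnitsTensor, realLogEmbedding_tmul, LinearMap.funLeft_apply,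
      fullLogEmbedding_galUnitsLinear]

theorem sum_realLogEmbedding (x : ℝ ⊗[ℤ] Additive (𝓞 L)ˣ) :
    ∑ w, realLogEmbedding L x w = 0 := by
  induction x with
  | zero => simp
  | add x y hx hy => simp [Finset.sum_add_distrib, hx, hy]
  | tmul r u =>
    simp [realLogEmbedding_tmul, fullLogEmbedding_apply, ← Finset.mul_sum, sum_mult_mul_log]

theorem funLeft_comp_realLogEmbedding_surjective :
    Function.Surjective (LinearMap.funLeft ℝ ℝ
      (Subtype.val : {w : InfinitePlace L // w ≠ w₀} → InfinitePlace L) ∘ₗ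
        realLogEmbedding L) := by
  rw [← LinearMap.range_eq_top, eq_top_iff, ← unitLattice_span_eq_top, Submodule.span_le]
  rintro _ ⟨u, -, rfl⟩
  exact ⟨1 ⊗ₜ u, by rw [LinearMap.comp_apply, realLogEmbedding_tmul, one_smul]; rfl⟩

theorem mem_range_realLogEmbedding_iff {f : InfinitePlace L → ℝ} :
    f ∈ LinearMap.range (realLogEmbedding L) ↔ ∑ w, f w = 0 := by
  classical
  refine ⟨?_, fun hf => ?_⟩
  · rintro ⟨x, rfl⟩
    exact sum_realLogEmbedding x
  obtain ⟨x, hx⟩ := funLeft_comp_realLogEmbedding_surjective (fun w => f w.1)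
  have hne (w : {w : InfinitePlace L // w ≠ w₀}) : realLogEmbedding L x w = f w := congrFun hx w
  have hsum := (sum_realLogEmbedding x).trans hf.symm
  simp only [Fintype.sum_eq_add_sum_subtype_ne _ (w₀ : InfinitePlace L), hne, add_left_inj] at hsum
  refine ⟨x, funext fun w => ?_⟩
  obtain rfl | hw := eq_or_ne w w₀
  exacts [hsum, hne ⟨w, hw⟩]

theorem finrank_tensor_units_eq_rank
    (E : Type*) [CommRing E] [NoZeroDivisors E] [CharZero E] :
    Module.finrank E (E ⊗[ℤ] Additive (𝓞 L)ˣ) = Units.rank L := by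
  rw [(TensorProduct.isBaseChange ℤ (Additive (𝓞 L)ˣ) E).finrank_eq, Units.finrank_eq]

variable (L) in
/-- The logarithmic embedding together with the diagonal `ℝ → ℝ^P`, where `P` is the set of infinite
places. It identifies the permutation module `ℝ^P` with the sum of `ℝ ⊗ 𝓞_L^×` and the trivial
representation. -/
noncomputable def augmentedLogEmbedding :
    (ℝ ⊗[ℤ] Additive (𝓞 L)ˣ) × ℝ →ₗ[ℝ] (InfinitePlace L → ℝ) :=
  (realLogEmbedding L).coprod (LinearMap.toSpanSingleton ℝ _ 1)

theorem augmentedLogEmbedding_prodMap (σ : L ≃ₐ[ℚ] L)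
    (x : (ℝ ⊗[ℤ] Additive (𝓞 L)ˣ) × ℝ) :
    augmentedLogEmbedding L ((galUnitsTensor L ℝ σ).prodMap LinearMap.id x) =
      LinearMap.funLeft ℝ ℝ (σ⁻¹ • ·) (augmentedLogEmbedding L x) := by
  ext w
  simp [augmentedLogEmbedding, realLogEmbedding_galUnitsTensor, LinearMap.funLeft_apply]

theorem augmentedLogEmbedding_surjective :
    Function.Surjective (augmentedLogEmbedding L) := fun f => by
  let mean : ℝ := (∑ w, f w) / Fintype.card (InfinitePlace L)
  obtain ⟨x, hx⟩ : f - mean • 1 ∈ LinearMap.range (realLogEmbedding L) := by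
    rw [mem_range_realLogEmbedding_iff]
    simp [mean, mul_div_cancel₀]
  exact ⟨(x, mean), by simp [augmentedLogEmbedding, hx]⟩

theorem augmentedLogEmbedding_bijective :
    Function.Bijective (augmentedLogEmbedding L) := by
  have hdim : Module.finrank ℝ ((ℝ ⊗[ℤ] Additive (𝓞 L)ˣ) × ℝ) =
      Module.finrank ℝ (InfinitePlace L → ℝ) := by
    rw [Module.finrank_prod, finrank_tensor_units_eq_rank, Module.finrank_self,
      Module.finrank_fintype_fun_eq_card, Units.rank, Nat.sub_add_cancel Fintype.card_pos]
  have hsurj := augmentedLogEmbedding_surjective (L := L)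
  exact ⟨(LinearMap.injective_iff_surjective_of_finrank_eq_finrank hdim).mpr hsurj, hsurj⟩

end LogarithmicEmbedding

section UnitsCharacter

open MulAction

variable (L : Type*) [Field L] [NumberField L]

theorem trace_galUnitsTensor_real (σ : L ≃ₐ[ℚ] L) :
    LinearMap.trace ℝ _ (galUnitsTensor L ℝ σ) = (fixedBy (InfinitePlace L) σ).ncard - 1 := by
  let e := LinearEquiv.ofBijective _ (augmentedLogEmbedding_bijective (L := L))
  have hconj : e.conj ((galUnitsTensor L ℝ σ).prodMap LinearMap.id) =
      LinearMap.funLeft ℝ ℝ (σ⁻¹ • · : InfinitePlace L → InfinitePlace L) := by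
    rw [LinearEquiv.conj_apply, ← LinearEquiv.eq_comp_toLinearMap_symm]
    exact LinearMap.ext (augmentedLogEmbedding_prodMap σ)
  have htrace := LinearMap.trace_conj' ((galUnitsTensor L ℝ σ).prodMap LinearMap.id) e
  rw [hconj, trace_funLeft, LinearMap.trace_prodMap', LinearMap.trace_id,
    Module.finrank_self] at htrace
  rw [← fixedBy_inv]
  exact eq_sub_of_add_eq (by exact_mod_cast htrace.symm)

variable (E : Type*) [Field E]

/-- The Galois representation on `𝓞_L^× ⊗_ℤ E` given by `galUnitsTensor`. -/
noncomputable def galUnitsRep : Representation E (L ≃ₐ[ℚ] L) (E ⊗[ℤ] Additive (𝓞 L)ˣ) where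
  toFun := galUnitsTensor L E
  map_one' := by
    have hone : galUnitsLinear L 1 = LinearMap.id := by
      ext
      simp [galUnitsLinear]
    rw [galUnitsTensor, hone, LinearMap.baseChange_id]
    rfl
  map_mul' σ σ' := by
    have hmul : galUnitsLinear L (σ * σ') = galUnitsLinear L σ ∘ₗ galUnitsLinear L σ' := by
      ext
      simp [galUnitsLinear]
    rw [galUnitsTensor, hmul, LinearMap.baseChange_comp]
    rfl

theorem character_galUnitsRep [CharZero E] (σ : L ≃ₐ[ℚ] L) :
    (galUnitsRep L E).character σ = (fixedBy (InfinitePlace L) σ).ncard - 1 := by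
  let n : ℤ := (fixedBy (InfinitePlace L) σ).ncard - 1
  have hreal : LinearMap.trace ℝ _ (galUnitsTensor L ℝ σ) = n := by
    simpa [n] using trace_galUnitsTensor_real L σ
  have hrat := (trace_baseChange_eq_intCast_iff (galUnitsLinear L σ) n ℝ).mp hreal
  have hE : (galUnitsRep L E).character σ = n :=
    (trace_baseChange_eq_intCast_iff (galUnitsLinear L σ) n E).mpr hrat
  simpa [n] using hE

end UnitsCharacter

instance isPretransitive_infinitePlace_s2 (k K : Type*) [Field k] [Field K] [Algebra k K]
    [IsGalois k K] [Subsingleton (InfinitePlace k)] :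
    MulAction.IsPretransitive (K ≃ₐ[k] K) (InfinitePlace K) :=
  ⟨fun _ _ => InfinitePlace.exists_smul_eq_of_comap_eq (Subsingleton.elim _ _)⟩

theorem stark_units_rank_general
    (L : Type*) [Field L] [NumberField L] [IsGalois ℚ L]
    (τ : L →+* ℂ) (c₀ : L ≃ₐ[ℚ] L)
    (hc₀ : ∀ x : L, τ (c₀ x) = (starRingEnd ℂ) (τ x))
    (E : Type*) [Field E] [CharZero E]
    (M : Type*) [AddCommGroup M] [Module E M] [FiniteDimensional E M]
    (ρ : Representation E (L ≃ₐ[ℚ] L) M) :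
    Module.finrank E (equivariantHoms ρ (galUnitsTensor L E)) +
        Module.finrank E ρ.invariants =
      Module.finrank E (LinearMap.ker (ρ c₀ - LinearMap.id)) := by
  have : Invertible (Nat.card (L ≃ₐ[ℚ] L) : E) :=
    invertibleOfNonzero (by exact_mod_cast Nat.card_pos.ne')
  have hconj : ComplexEmbedding.IsConj τ c₀ := RingHom.ext fun x => (hc₀ x).symm
  have hrank := finrank_intertwiningMap_add_finrank_invariants ρ (character_galUnitsRep L E)
    (InfinitePlace.mk τ)
  rw [← (equivariantHomsEquivIntertwiningMap ρ (galUnitsRep L E)).finrank_eq,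
    invariants_comp_subtype_eq_ker ρ hconj.coe_stabilizer_mk] at hrank
  exact_mod_cast hrank

/-- Let `L` be a number field, Galois over `ℚ` with Galois group `G`, `τ` a
complex embedding of `L` with induced complex conjugation `c₀ ∈ G`.  Let `E` be a field of
characteristic zero and `M` a finite-dimensional `E`-linear representation of `G` containing
no copy of the trivial representation (i.e. `M^G = 0`).  Then
`dim_E Hom_{E[G]}(M, 𝓞_L^× ⊗_ℤ E) = dim_E M^{⟨c₀⟩}`. -/
theorem stark_units_rank
    (L : Type*) [Field L] [NumberField L] [IsGalois ℚ L]
    (τ : L →+* ℂ) (c₀ : L ≃ₐ[ℚ] L)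
    (hc₀ : ∀ x : L, τ (c₀ x) = (starRingEnd ℂ) (τ x))
    (E : Type*) [Field E] [CharZero E]
    (M : Type*) [AddCommGroup M] [Module E M] [FiniteDimensional E M]
    (ρ : Representation E (L ≃ₐ[ℚ] L) M)
    (htriv : ∀ m : M, (∀ σ : L ≃ₐ[ℚ] L, ρ σ m = m) → m = 0) :
    Module.finrank E
        (equivariantHoms (fun σ : L ≃ₐ[ℚ] L => ρ σ) (fun σ : L ≃ₐ[ℚ] L => galUnitsTensor L E σ)) =
      Module.finrank E (LinearMap.ker (ρ c₀ - LinearMap.id)) := by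
  have hinv : ρ.invariants = ⊥ := (Submodule.eq_bot_iff _).mpr htriv
  have hrank := stark_units_rank_general L τ c₀ hc₀ E M ρ
  rwa [hinv, finrank_bot, add_zero] at hrank
end
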